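/- Let 𝔐 be a Γ-ring satisfying conditions (i)–(iv), let k ≥ 1 be an integer, let f : 𝔐 × Γ × 𝔐 → 𝔐 satisfy conditions (v)–(vii), and fix an index 1 ∈ Λ with e₁ := e_1. Then f(e₁ λ x, γ, e₁ μ y) = 0 for all x, y ∈ 𝔐 and all λ, μ, γ ∈ Γ. -/

import Mathlib

/-!
The map `f` plays the role of the additivity defect of a multiplicative map, and the argument is
Martindale's, with the Peirce decomposition relative to `e = e a₁` and `g = γs a₁`.

An operator `m g ·` or `· g m` with `e g m = m` is a `k`-fold product operator, since it can be padded
by factors `e g`; hence `f` commutes with it (`exists_left_mul`, `exists_right_mul`). By iterating (ii),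
an element killed by all `k`-fold right products vanishes (`eq_zero_of_prodF`).

* On `M₁₂ = {x | e g x = x, x g e = 0}`: a right product takes `x, y` to `x g s, y g s` with `e g s = 0`,
  and `x g s = (e + x) g s`, `y g s = (e + x) g (y g s)`. Therefore
  `f(x g s, y g s) = (e + x) g f(s, y g s) = f(0, y g s) + f(x g s, 0) = 0`.
* On `M₁₁ = {x | e g x = x = x g e}`: right multiplication by `g (e γ F'(m, δ))` lands in `M₁₂`,
  and condition (iv) applies.
* On `e g M`: with `z = f(x, y)`, the case of `M₁₁` gives `z g e = 0`, so that
  `z δ m = z g F(δ, m)`, and the case of `M₁₂` applied to `F'(x, g)`, `F'(y, g)` shows that every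
  `k`-fold right product of `z` vanishes.
-/

/-- A `Γ`-ring in the sense of Barnes: abelian groups `M` and `Γ` with a triple product
`M → Γ → M → M` that is additive in each variable and associative. -/
structure GammaRing (M : Type*) (Γ : Type*) [AddCommGroup M] [AddCommGroup Γ] where
  tri : M → Γ → M → M
  add_left : ∀ x y α z, tri (x + y) α z = tri x α z + tri y α z
  add_right : ∀ x α y z, tri x α (y + z) = tri x α y + tri x α z
  add_mid : ∀ x α β y, tri x (α + β) y = tri x α y + tri x β y
  assoc : ∀ x α y β z, tri (tri x α y) β z = tri x α (tri y β z)

namespace GammaRing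

variable {M Γ : Type*} [AddCommGroup M] [AddCommGroup Γ]

/-- The product `x₀ γ₀ x₁ γ₁ ⋯ γ_{k-1} x_k` (right associated). -/
def prodF (G : GammaRing M Γ) : (k : ℕ) → (Fin (k + 1) → M) → (Fin k → Γ) → M
  | 0, x, _ => x 0
  | k + 1, x, γ => G.tri (x 0) (γ 0) (G.prodF k (fun i => x i.succ) (fun i => γ i.succ))

end GammaRing

namespace GammaRing

variable {M Γ : Type*} [AddCommGroup M] [AddCommGroup Γ]

lemma zero_tri (G : GammaRing M Γ) (α : Γ) (z : M) : G.tri 0 α z = 0 := by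
  have h := G.add_left 0 0 α z
  simpa using h

lemma tri_zero (G : GammaRing M Γ) (x : M) (α : Γ) : G.tri x α 0 = 0 := by
  have h := G.add_right x α 0 0
  simpa using h

lemma sub_tri (G : GammaRing M Γ) (x y : M) (α : Γ) (z : M) :
    G.tri (x - y) α z = G.tri x α z - G.tri y α z := by
  have h := G.add_left (x - y) y α z
  rw [sub_add_cancel] at h
  rw [h, add_sub_cancel_right]

lemma prodF_cons_succ (G : GammaRing M Γ) (n : ℕ) (x : M) (d : Γ) (u : Fin (n + 1) → M)
    (δ : Fin n → Γ) :
    G.prodF (n + 1) (Fin.cons x u) (Fin.cons d δ) = G.tri x d (G.prodF n u δ) := rfl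

/-- Generalized associativity: the first two factors of a product may be multiplied together. -/
lemma prodF_cons_cons (G : GammaRing M Γ) (n : ℕ) (x m : M) (d : Γ) (u : Fin n → M)
    (δ : Fin n → Γ) :
    G.prodF (n + 1) (Fin.cons x (Fin.cons m u)) (Fin.cons d δ) =
      G.prodF n (Fin.cons (G.tri x d m) u) δ := by
  cases n with
  | zero => rfl
  | succ n => exact (G.assoc _ _ _ _ _).symm

/-- An element all of whose `n`-fold right products vanish is zero, by iterating (ii). -/
lemma eq_zero_of_prodF (G : GammaRing M Γ)
    (hii : ∀ x : M, (∀ (γ : Γ) (m : M), G.tri x γ m = 0) → x = 0) (n : ℕ) :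
    ∀ z : M, (∀ (u : Fin n → M) (δ : Fin n → Γ), G.prodF n (Fin.cons z u) δ = 0) → z = 0 := by
  induction n with
  | zero => exact fun z h => h Fin.elim0 Fin.elim0
  | succ n ih =>
    intro z h
    refine hii z fun d m => ih _ fun u δ => ?_
    rw [← prodF_cons_cons]
    exact h _ _

/-- If `e g m = m`, left multiplication by `m d` is an `(n+1)`-fold product operator. -/
lemma exists_left_mul (G : GammaRing M Γ) {e m : M} {g : Γ} (d : Γ) (hm : G.tri e g m = m)
    (n : ℕ) : ∃ (u : Fin (n + 1) → M) (δ : Fin (n + 1) → Γ),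
      ∀ x, G.prodF (n + 1) (Fin.snoc u x) δ = G.tri m d x := by
  induction n with
  | zero => exact ⟨fun _ => m, fun _ => d, fun x => rfl⟩
  | succ n ih =>
    obtain ⟨u, δ, h⟩ := ih
    refine ⟨Fin.cons e u, Fin.cons g δ, fun x => ?_⟩
    rw [← Fin.cons_snoc_eq_snoc_cons, prodF_cons_succ, h, ← G.assoc, hm]

/-- If `e g m = m`, right multiplication by `g m` is an `(n+1)`-fold product operator. -/
lemma exists_right_mul (G : GammaRing M Γ) {e m : M} {g : Γ} (hm : G.tri e g m = m)
    (n : ℕ) : ∃ (u : Fin (n + 1) → M) (δ : Fin (n + 1) → Γ),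
      ∀ x, G.prodF (n + 1) (Fin.cons x u) δ = G.tri x g m := by
  induction n with
  | zero => exact ⟨fun _ => m, fun _ => g, fun x => rfl⟩
  | succ n ih =>
    obtain ⟨u, δ, h⟩ := ih
    refine ⟨Fin.cons e u, Fin.cons g δ, fun x => ?_⟩
    rw [prodF_cons_succ, h, hm]

end GammaRing

/-- Claim 5: `f(e₁ λ x, γ, e₁ μ y) = 0`. -/
theorem gammaRing_f_claim5
    {M Γ Λ : Type*} [AddCommGroup M] [AddCommGroup Γ] [Nonempty Λ]
    (G : GammaRing M Γ)
    (e : Λ → M) (γs : Λ → Γ)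
    (hidem : ∀ a, G.tri (e a) (γs a) (e a) = e a)
    -- condition (i)
    (F : Λ → Γ → M → M) (F' : Λ → M → Γ → M)
    (hFadd : ∀ a γ x y, F a γ (x + y) = F a γ x + F a γ y)
    (hF'add : ∀ a x y γ, F' a (x + y) γ = F' a x γ + F' a y γ)
    (hFγ : ∀ a x, F a (γs a) x = x - G.tri (e a) (γs a) x)
    (hF'γ : ∀ a x, F' a x (γs a) = x - G.tri x (γs a) (e a))
    (hFmid : ∀ a x y β γ, G.tri (F' a x β) γ y = G.tri x β (F a γ y))
    -- condition (ii)
    (hii : ∀ x : M, (∀ (γ : Γ) (m : M), G.tri x γ m = 0) → x = 0)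
    -- condition (iii)
    (hiii : ∀ x : M, (∀ (a : Λ) (γ δ : Γ) (m : M), G.tri (G.tri (e a) γ m) δ x = 0) → x = 0)
    -- condition (iv)
    (hiv : ∀ (a : Λ) (x : M),
      (∀ (γ δ : Γ) (m : M),
        F' a (G.tri (G.tri (G.tri (e a) (γs a) x) (γs a) (e a)) γ m) δ = 0) →
      G.tri (G.tri (e a) (γs a) x) (γs a) (e a) = 0)
    (k : ℕ) (hk : 1 ≤ k)
    (f : M → Γ → M → M)
    -- condition (v)
    (hv : ∀ (x : M) (γ : Γ), f x γ 0 = 0 ∧ f 0 γ x = 0)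
    -- condition (vi): u₁γ₁u₂⋯γ_{k-1}u_kγ_k f(x,γ,y) = f(u₁γ₁⋯u_kγ_k x, γ, u₁γ₁⋯u_kγ_k y)
    (hvi : ∀ (u : Fin k → M) (δ : Fin k → Γ) (x : M) (γ : Γ) (y : M),
      G.prodF k (Fin.snoc u (f x γ y)) δ =
        f (G.prodF k (Fin.snoc u x) δ) γ (G.prodF k (Fin.snoc u y) δ))
    -- condition (vii): f(x,γ,y)γ₁u₁⋯γ_ku_k = f(xγ₁u₁⋯γ_ku_k, γ, yγ₁u₁⋯γ_ku_k)
    (hvii : ∀ (u : Fin k → M) (δ : Fin k → Γ) (x : M) (γ : Γ) (y : M),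
      G.prodF k (Fin.cons (f x γ y) u) δ =
        f (G.prodF k (Fin.cons x u) δ) γ (G.prodF k (Fin.cons y u) δ))
    (a₁ : Λ) :
    ∀ (x y : M) (lam mu γ : Γ),
      f (G.tri (e a₁) lam x) γ (G.tri (e a₁) mu y) = 0 := by
  obtain ⟨n, rfl⟩ : ∃ n, k = n + 1 := ⟨k - 1, by omega⟩
  have hid := hidem a₁
  have hFg := hFγ a₁
  have hF'g := hF'γ a₁
  have hmid := hFmid a₁
  have hiv' := hiv a₁
  generalize e a₁ = E at *
  generalize γs a₁ = g at *
  have hL : ∀ m x c y, G.tri E g m = m →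
      G.tri m g (f x c y) = f (G.tri m g x) c (G.tri m g y) := by
    intro m x c y hm
    obtain ⟨u, δ, h⟩ := G.exists_left_mul g hm n
    simpa only [h] using hvi u δ x c y
  have hR : ∀ m x c y, G.tri E g m = m →
      G.tri (f x c y) g m = f (G.tri x g m) c (G.tri y g m) := by
    intro m x c y hm
    obtain ⟨u, δ, h⟩ := G.exists_right_mul hm n
    simpa only [h] using hvii u δ x c y
  have hEF : ∀ d m, G.tri E g (F a₁ d m) = 0 := by
    intro d m
    rw [← hmid, hF'g, hid, sub_self, G.zero_tri]
  have hF'E : ∀ x d, G.tri (F' a₁ x d) g E = 0 := by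
    intro x d
    rw [hmid, hFg, hid, sub_self, G.tri_zero]
  -- `F'` is linear for left multiplication, as right products separate points.
  have hF'lin : ∀ x α y d, F' a₁ (G.tri x α y) d = G.tri x α (F' a₁ y d) := by
    intro x α y d
    rw [← sub_eq_zero]
    refine hii _ fun γ m => ?_
    rw [G.sub_tri, hmid, G.assoc, G.assoc, hmid, sub_self]
  have hshift : ∀ x d m, G.tri x g E = 0 → G.tri x d m = G.tri x g (F a₁ d m) := by
    intro x d m hx
    rw [← hmid, hF'g, hx, sub_zero]
  -- `f` vanishes on the Peirce component `M₁₂`.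
  have hA : ∀ x y c, G.tri E g x = x → G.tri x g E = 0 → G.tri E g y = y → G.tri y g E = 0 →
      f x c y = 0 := by
    intro x y c hx hx' hy hy'
    have key : ∀ s, G.tri E g s = 0 → f (G.tri x g s) c (G.tri y g s) = 0 := by
      intro s hs
      have hxy : G.tri x g (G.tri y g s) = 0 := by
        rw [← hy, G.assoc, ← G.assoc x, hx', G.zero_tri]
      have h1 := hL (E + x) s c (G.tri y g s) (by rw [G.add_right, hid, hx])
      rw [G.add_left, G.add_left, G.add_left, hL E _ _ _ hid, hL x _ _ _ hx, hxy, hs,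
        (hv _ _).1, (hv _ _).2, ← G.assoc E, hy] at h1
      simpa using h1.symm
    refine G.eq_zero_of_prodF hii (n + 1) _ fun u δ => ?_
    rw [hvii, ← Fin.cons_self_tail δ]
    simp only [G.prodF_cons_succ]
    rw [hshift x _ _ hx', hshift y _ _ hy']
    exact key _ (hEF _ _)
  -- `f` vanishes on the Peirce component `M₁₁`.
  have hB : ∀ x y c, G.tri E g x = x → G.tri x g E = x → G.tri E g y = y → G.tri y g E = y →
      f x c y = 0 := by
    intro x y c hx hx' hy hy'
    have hz : G.tri (G.tri E g (f x c y)) g E = f x c y := by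
      rw [hL E _ _ _ hid, hx, hy, hR E _ _ _ hid, hx', hy']
    rw [← hz]
    refine hiv' _ fun γ δ m => ?_
    have hzE : G.tri (f x c y) g E = f x c y := by rw [hR E _ _ _ hid, hx', hy']
    rw [hz, hF'lin, ← hzE, G.assoc, hR _ _ _ _ (by rw [← G.assoc, hid])]
    apply hA
    · rw [← G.assoc, hx]
    · rw [G.assoc, G.assoc, hF'E, G.tri_zero, G.tri_zero]
    · rw [← G.assoc, hy]
    · rw [G.assoc, G.assoc, hF'E, G.tri_zero, G.tri_zero]
  have hC : ∀ x y c, G.tri E g x = x → G.tri E g y = y → f x c y = 0 := by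
    intro x y c hx hy
    have hzE : G.tri (f x c y) g E = 0 := by
      rw [hR E _ _ _ hid]
      apply hB
      · rw [← G.assoc, hx]
      · rw [G.assoc, hid]
      · rw [← G.assoc, hy]
      · rw [G.assoc, hid]
    have h12 : f (F' a₁ x g) c (F' a₁ y g) = 0 :=
      hA _ _ _ (by rw [← hF'lin, hx]) (hF'E _ _) (by rw [← hF'lin, hy]) (hF'E _ _)
    refine G.eq_zero_of_prodF hii (n + 1) _ fun u δ => ?_
    -- Replacing the leading factor `δ₀ u₀` by `g F(δ₀, u₀)` does not change the product with `f x c y`,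
    -- and turns the products with `x` and `y` into those with their `M₁₂` components.
    have h2 := hvii (Fin.cons (F a₁ (δ 0) (u 0)) (Fin.tail u)) (Fin.cons g (Fin.tail δ)) x c y
    have h3 := hvii u δ (F' a₁ x g) c (F' a₁ y g)
    rw [h12, ← Fin.cons_self_tail u, ← Fin.cons_self_tail δ] at h3
    rw [← Fin.cons_self_tail u, ← Fin.cons_self_tail δ]
    simp only [G.prodF_cons_cons] at h2 h3 ⊢
    rw [hshift _ _ _ hzE, h2, ← hmid, ← hmid, ← h3, ← G.prodF_cons_cons, G.prodF_cons_succ,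
      G.zero_tri]
  intro x y lam mu γ
  exact hC _ _ _ (by rw [← G.assoc, hid]) (by rw [← G.assoc, hid])
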